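/- Let $f \in W^{1,1}((0,T)) \cap C([0,T])$ attain its minimum over $[0,T]$ at a point $t_0 \in (0,T]$. Then the Riemann-Liouville fractional derivative of order $\alpha \in (0,1)$ of $f(\cdot) - f(0)$ is nonpositive at $t_0$: $\partial_t^\alpha (f - f(0))(t_0) \leq 0$. -/

import Mathlib

open MeasureTheory Set

noncomputable section

/-- Riemann–Liouville fractional derivative of order `α`:
`∂_t^α v (t) = d/dt ∫_0^t (t-s)^{-α}/Γ(1-α) · v(s) ds`. -/
def riemannLiouville (α : ℝ) (v : ℝ → ℝ) (t : ℝ) : ℝ :=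
  deriv (fun τ => ∫ s in Set.Ioc 0 τ, (τ - s) ^ (-α) / Real.Gamma (1 - α) * v s) t


lemma inner_int (a η u : ℝ) (ha : 0 < a) (ha1 : a < 1) (hη : 0 < η) (hu : η ≤ u) :
    IntervalIntegrable (fun h : ℝ => h^(a-2)*(u-h)^(-a)) volume η u ∧
    ∫ h in η..u, h^(a-2)*(u-h)^(-a) = ((u-η)^(1-a) * η^(a-1))/((1-a)*u) := by
  have hu0 : 0 < u := by linarith
  have h1a : 0 < 1 - a := by linarith
  let F : ℝ → ℝ := fun h => -((u-h)^(1-a) * h^(a-1))/((1-a)*u)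
  have hc : ContinuousOn F (Icc η u) := by
    intro h hh
    have : h ≠ 0 := by have := hh.1; intro h0; linarith
    apply ContinuousAt.continuousWithinAt
    apply ContinuousAt.div_const
    apply ContinuousAt.neg
    apply ContinuousAt.mul
    · exact ContinuousAt.rpow_const (by fun_prop) (Or.inr h1a.le)
    · exact ContinuousAt.rpow_const (by fun_prop) (Or.inl this)
  have hd : ∀ h ∈ Ioo η u, HasDerivAt F (h^(a-2)*(u-h)^(-a)) h := by
    intro h hh
    have h0 : 0 < h := by linarith [hh.1]
    have h1 : 0 < u - h := by linarith [hh.2]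
    have d1 : HasDerivAt (fun h : ℝ => (u-h)^(1-a)) ((-1) * (1-a) * (u-h)^(1-a-1)) h :=
      ((hasDerivAt_id h).const_sub u).rpow_const (Or.inl h1.ne')
    have d2 : HasDerivAt (fun h : ℝ => h^(a-1)) (1 * (a-1) * h^(a-1-1)) h :=
      (hasDerivAt_id h).rpow_const (Or.inl h0.ne')
    have := ((d1.mul d2).neg).div_const ((1-a)*u)
    refine this.congr_deriv ?_
    have e1 : (u-h)^(1-a) = (u-h)^(-a) * (u-h) := by
      rw [← Real.rpow_add_one h1.ne']; ring_nf
    have e2 : h^(a-1) = h^(a-2) * h := by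
      rw [← Real.rpow_add_one h0.ne']; ring_nf
    rw [show 1-a-1 = -a by ring, show a-1-1 = a-2 by ring, e1, e2]
    field_simp
    ring
  have hi : IntervalIntegrable (fun h : ℝ => h^(a-2)*(u-h)^(-a)) volume η u := by
    apply intervalIntegral.intervalIntegrable_deriv_of_nonneg (g := F)
    · rwa [uIcc_of_le hu]
    · rwa [min_eq_left hu, max_eq_right hu]
    · rw [min_eq_left hu, max_eq_right hu]
      intro h hh
      have h0 : 0 < h := by linarith [hh.1]
      have h1 : 0 < u - h := by linarith [hh.2]
      positivity
  refine ⟨hi, ?_⟩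
  rw [intervalIntegral.integral_eq_sub_of_hasDerivAt_of_le hu hc hd hi]
  simp only [F, sub_self, Real.zero_rpow h1a.ne']
  ring

lemma fub (a η ε : ℝ) (ha : 0 < a) (ha1 : a < 1) (hη : 0 < η) (hηε : η < ε)
    (p : ℝ → ℝ) (hp : Continuous p) (hp0 : ∀ u, 0 ≤ p u) :
    IntervalIntegrable (fun h : ℝ => h^(a-2) * ∫ u in h..ε, (u-h)^(-a) * p u) volume η ε ∧
    ∫ h in η..ε, (h^(a-2) * ∫ u in h..ε, (u-h)^(-a) * p u) =
      ∫ u in η..ε, p u * (((u-η)^(1-a) * η^(a-1))/((1-a)*u)) := by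
  let Φ : ℝ → ℝ → ℝ := fun h u => if h < u then p u * (h^(a-2)*(u-h)^(-a)) else 0
  let μ := (volume : Measure ℝ).restrict (Ioc η ε)
  have hmeas : Measurable (Function.uncurry Φ) := by
    apply Measurable.ite (measurableSet_lt measurable_fst measurable_snd)
    · have := hp.measurable
      fun_prop
    · fun_prop
  have hu : ∀ u ∈ Ioc η ε, Integrable (fun h => Φ h u) μ ∧
      ∫ h, Φ h u ∂μ = p u * (((u-η)^(1-a) * η^(a-1))/((1-a)*u)) := by
    intro u hu
    have e : (fun h => Φ h u) = (Iio u).indicator (fun h => p u * (h^(a-2)*(u-h)^(-a))) := by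
      ext h; simp [Φ, indicator]
    have e2 : Ioc η ε ∩ Iio u = Ioo η u := by
      ext x; simp only [mem_inter_iff, mem_Ioc, mem_Iio, mem_Ioo]
      constructor
      · rintro ⟨⟨h1, h2⟩, h3⟩; exact ⟨h1, h3⟩
      · rintro ⟨h1, h3⟩; exact ⟨⟨h1, h3.le.trans hu.2⟩, h3⟩
    obtain ⟨i1, i2⟩ := inner_int a η u ha ha1 hη hu.1.le
    rw [e]
    constructor
    · rw [integrable_indicator_iff measurableSet_Iio, IntegrableOn,
        Measure.restrict_restrict measurableSet_Iio, inter_comm, e2]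
      exact (((intervalIntegrable_iff_integrableOn_Ioo_of_le hu.1.le).1 i1).const_mul _)
    · rw [setIntegral_indicator measurableSet_Iio, e2, ← integral_Ioc_eq_integral_Ioo,
        ← intervalIntegral.integral_of_le hu.1.le, intervalIntegral.integral_const_mul, i2]
  have hnn : ∀ h ∈ Ioc η ε, ∀ u, 0 ≤ Φ h u := by
    intro h hh u
    simp only [Φ]
    split_ifs with hlt
    · have h0 : 0 < h := by linarith [hh.1]
      have h1 : 0 < u - h := by linarith
      have := hp0 u
      positivity
    · exact le_rfl
  have hcont : ContinuousOn (fun u => p u * (((u-η)^(1-a) * η^(a-1))/((1-a)*u))) (Icc η ε) := by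
    intro u hu
    have : (1-a)*u ≠ 0 := by
      have := hu.1
      exact (mul_pos (by linarith) (by linarith)).ne'
    apply ContinuousAt.continuousWithinAt
    apply hp.continuousAt.mul
    apply ContinuousAt.div _ (by fun_prop) this
    apply ContinuousAt.mul _ continuousAt_const
    exact ContinuousAt.rpow_const (by fun_prop) (Or.inr (by linarith))
  have hint : Integrable (Function.uncurry Φ) (μ.prod μ) := by
    rw [integrable_prod_iff' hmeas.aestronglyMeasurable]
    constructor
    · exact (ae_restrict_mem measurableSet_Ioc).mono fun u h => (hu u h).1
    · have : Integrable (fun u => p u * (((u-η)^(1-a) * η^(a-1))/((1-a)*u))) μ :=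
        (hcont.integrableOn_Icc).mono_set Ioc_subset_Icc_self
      refine this.congr ?_
      refine (ae_restrict_mem measurableSet_Ioc).mono fun u h => ?_
      simp only []
      rw [← (hu u h).2]
      apply integral_congr_ae
      refine (ae_restrict_mem measurableSet_Ioc).mono fun x hx => ?_
      simp only [Function.uncurry]
      rw [Real.norm_of_nonneg (hnn x hx u)]
  have hh : ∀ h ∈ Ioc η ε, ∫ u, Φ h u ∂μ = h^(a-2) * ∫ u in h..ε, (u-h)^(-a) * p u := by
    intro h hh
    have e : (fun u => Φ h u) = (Ioi h).indicator (fun u => h^(a-2) * ((u-h)^(-a) * p u)) := by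
      ext u; simp only [Φ, indicator, mem_Ioi]; split_ifs <;> ring
    have e2 : Ioc η ε ∩ Ioi h = Ioc h ε := by
      rw [Ioc_inter_Ioi, max_eq_right hh.1.le]
    rw [e, setIntegral_indicator measurableSet_Ioi, e2,
        ← intervalIntegral.integral_of_le hh.2, intervalIntegral.integral_const_mul]
  have hswap := integral_integral_swap hint
  constructor
  · rw [intervalIntegrable_iff_integrableOn_Ioc_of_le hηε.le]
    exact hint.integral_prod_left.congr
      ((ae_restrict_mem measurableSet_Ioc).mono fun h h' => hh h h')
  · rw [intervalIntegral.integral_of_le hηε.le, intervalIntegral.integral_of_le hηε.le,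
      ← setIntegral_congr_fun measurableSet_Ioc hh, hswap]
    exact setIntegral_congr_fun measurableSet_Ioc (fun u h => (hu u h).2)

lemma est (a η ε δ m N : ℝ) (ha : 0 < a) (ha1 : a < 1) (hη : 0 < η) (hηε : η < ε)
    (hm : 0 ≤ m) (hN : 0 ≤ N)
    (p : ℝ → ℝ) (hp : Continuous p) (hp0 : ∀ u, 0 ≤ p u)
    (hpm : ∀ u ∈ Icc 0 ε, p u ≤ m + N * u)
    (hK : ∀ h, 0 < h → h ≤ ε →
      δ * h ≤ (∫ u in (0:ℝ)..ε, u^(-a) * p u) - ∫ u in h..ε, (u-h)^(-a) * p u) :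
    (1-a) * (δ * ((ε^a - η^a)/a)) ≤
      (m + N*η)/(1-a) + m/a + η^a * (N * ε^(1-a)/(1-a)) := by
  have h1a : 0 < 1 - a := by linarith
  have hε : 0 < ε := by linarith
  obtain ⟨f1, f2⟩ := fub a η ε ha ha1 hη hηε p hp hp0
  have h0 : (0:ℝ) ∉ uIcc η ε := by
    rw [uIcc_of_le hηε.le]; intro h; linarith [h.1]
  have ii : ∀ r : ℝ, IntervalIntegrable (fun x : ℝ => x^r) volume η ε := fun r =>
    intervalIntegral.intervalIntegrable_rpow (Or.inr h0)
  have i0 : ∀ x y, IntervalIntegrable (fun x : ℝ => x^(-a)) volume x y := fun x y =>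
    intervalIntegral.intervalIntegrable_rpow' (by linarith)
  have ip : ∀ x y, IntervalIntegrable (fun x : ℝ => x^(-a) * p x) volume x y := fun x y =>
    (i0 x y).mul_continuousOn hp.continuousOn
  set P := ∫ u in (0:ℝ)..ε, u^(-a) * p u with hP
  have S0 : ∫ h in η..ε, δ * h^(a-1) ≤
      ∫ h in η..ε, (P * h^(a-2) - h^(a-2) * ∫ u in h..ε, (u-h)^(-a) * p u) := by
    apply intervalIntegral.integral_mono_on hηε.le ((ii _).const_mul _)
      (((ii _).const_mul _).sub f1)
    intro h hh
    have hh0 : 0 < h := by linarith [hh.1]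
    have e2 : h^(a-1) = h^(a-2) * h := by
      rw [← Real.rpow_add_one hh0.ne']; ring_nf
    have := mul_le_mul_of_nonneg_left (hK h hh0 hh.2) (Real.rpow_nonneg hh0.le (a-2))
    rw [e2]; linarith
  rw [intervalIntegral.integral_sub ((ii _).const_mul _) f1, f2,
    intervalIntegral.integral_const_mul, intervalIntegral.integral_const_mul,
    integral_rpow (Or.inr ⟨by linarith, h0⟩), integral_rpow (Or.inr ⟨by linarith, h0⟩),
    show a - 1 + 1 = a by ring, show a - 2 + 1 = a - 1 by ring] at S0
  have hPsplit : P = (∫ u in (0:ℝ)..η, u^(-a) * p u) + ∫ u in η..ε, u^(-a) * p u :=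
    (intervalIntegral.integral_add_adjacent_intervals (ip _ _) (ip _ _)).symm
  have hP0 : 0 ≤ P := by
    apply intervalIntegral.integral_nonneg hε.le
    intro u hu
    exact mul_nonneg (Real.rpow_nonneg hu.1 _) (hp0 u)
  have hR : ∫ u in η..ε, p u * (((u-η)^(1-a) * η^(a-1))/((1-a)*u)) =
      η^(a-1)/(1-a) * ∫ u in η..ε, p u * ((u-η)^(1-a)/u) := by
    rw [← intervalIntegral.integral_const_mul]
    apply intervalIntegral.integral_congr
    intro u hu
    rw [uIcc_of_le hηε.le] at hu
    have : u ≠ 0 := by have := hu.1; intro h; linarith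
    simp only []
    field_simp
  have iR : IntervalIntegrable (fun u => p u * ((u-η)^(1-a)/u)) volume η ε := by
    apply ContinuousOn.intervalIntegrable
    intro u hu
    have : u ≠ 0 := fun h => h0 (h ▸ hu)
    apply ContinuousAt.continuousWithinAt
    apply hp.continuousAt.mul
    apply ContinuousAt.div _ (by fun_prop) this
    exact ContinuousAt.rpow_const (by fun_prop) (Or.inr (by linarith))
  have B1 : ∫ u in (0:ℝ)..η, u^(-a) * p u ≤ (m + N*η) * (η^(1-a)/(1-a)) := by
    have : ∫ u in (0:ℝ)..η, u^(-a) * p u ≤ ∫ u in (0:ℝ)..η, (m+N*η) * u^(-a) := by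
      apply intervalIntegral.integral_mono_on hη.le (ip _ _) ((i0 _ _).const_mul _)
      intro u hu
      rw [mul_comm]
      apply mul_le_mul_of_nonneg_right _ (Real.rpow_nonneg hu.1 _)
      have := hpm u ⟨hu.1, by linarith [hu.2]⟩
      have := mul_le_mul_of_nonneg_left hu.2 hN
      linarith
    rwa [intervalIntegral.integral_const_mul, integral_rpow (Or.inl (by linarith)),
      show -a+1 = 1-a by ring, Real.zero_rpow h1a.ne', sub_zero] at this
  have B2 : (∫ u in η..ε, u^(-a) * p u) - ∫ u in η..ε, p u * ((u-η)^(1-a)/u) ≤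
      η * (m * η^(-a)/a + N * (ε^(1-a)/(1-a))) := by
    rw [← intervalIntegral.integral_sub (ip _ _) iR]
    have : ∫ u in η..ε, (u^(-a) * p u - p u * ((u-η)^(1-a)/u)) ≤
        ∫ u in η..ε, (η * m * u^(-a-1) + η * N * u^(-a)) := by
      apply intervalIntegral.integral_mono_on hηε.le ((ip _ _).sub iR)
        (((ii _).const_mul _).add ((ii _).const_mul _))
      intro u hu
      have hu0 : 0 < u := by linarith [hu.1]
      have k1 : u^(-a) = u^(-a-1) * u := by
        rw [← Real.rpow_add_one hu0.ne']; ring_nf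
      have k2 : u^(1-a) = u^(-a-1) * u * u := by
        rw [← Real.rpow_add_one hu0.ne', ← Real.rpow_add_one hu0.ne']; ring_nf
      have x0 : 0 ≤ 1 - η/u := by
        rw [sub_nonneg, div_le_one hu0]; exact hu.1
      have x1 : 1 - η/u ≤ 1 := by
        have : 0 < η / u := by positivity
        linarith
      have k3 : 1 - η/u ≤ (1-η/u)^(1-a) := by
        have := Real.rpow_le_rpow_of_exponent_ge' x0 x1 h1a.le (by linarith : 1-a ≤ 1)
        rwa [Real.rpow_one] at this
      have k4 : (u-η)^(1-a) = u^(1-a) * (1-η/u)^(1-a) := by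
        rw [← Real.mul_rpow hu0.le x0]; congr 1; field_simp
      have hX : 0 ≤ u^(-a-1) := Real.rpow_nonneg hu0.le _
      have k5 : (u-η)^(1-a)/u ≥ u^(-a-1) * (u - η) := by
        rw [ge_iff_le, le_div_iff₀ hu0, k4, k2]
        have := mul_le_mul_of_nonneg_left k3 (by positivity : 0 ≤ u^(-a-1) * u * u)
        refine le_trans (le_of_eq ?_) this
        field_simp
      have k6 := mul_le_mul_of_nonneg_left k5 (hp0 u)
      have k7 := mul_le_mul_of_nonneg_left (hpm u ⟨hu0.le, hu.2⟩) (mul_nonneg hη.le hX)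
      rw [k1]
      nlinarith
    refine this.trans ?_
    rw [intervalIntegral.integral_add ((ii _).const_mul _) ((ii _).const_mul _),
      intervalIntegral.integral_const_mul, intervalIntegral.integral_const_mul,
      integral_rpow (Or.inr ⟨by linarith, h0⟩), integral_rpow (Or.inr ⟨by linarith, h0⟩),
      show -a-1+1 = -a by ring, show -a+1=1-a by ring]
    have y1 : (ε^(-a) - η^(-a))/(-a) ≤ η^(-a)/a := by
      rw [div_neg, ← neg_div]
      apply div_le_div_of_nonneg_right _ ha.le
      have := Real.rpow_nonneg hε.le (-a)
      linarith
    have y2 : (ε^(1-a) - η^(1-a))/(1-a) ≤ ε^(1-a)/(1-a) := by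
      apply div_le_div_of_nonneg_right _ h1a.le
      have := Real.rpow_nonneg hη.le (1-a)
      linarith
    have z1 := mul_le_mul_of_nonneg_left y1 (mul_nonneg hη.le hm)
    have z2 := mul_le_mul_of_nonneg_left y2 (mul_nonneg hη.le hN)
    refine (add_le_add z1 z2).trans (le_of_eq (by ring))
  have B3 : P * ((ε^(a-1) - η^(a-1))/(a-1)) ≤ P * (η^(a-1)/(1-a)) := by
    apply mul_le_mul_of_nonneg_left _ hP0
    rw [show a - 1 = -(1-a) by ring, div_neg, ← neg_div]
    apply div_le_div_of_nonneg_right _ h1a.le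
    have := Real.rpow_nonneg hε.le (-(1-a))
    linarith
  rw [hR] at S0
  have hE : 0 < η^(a-1) := Real.rpow_pos_of_pos hη _
  have C1 : δ * ((ε^a - η^a)/a) ≤ η^(a-1)/(1-a) *
     ((m + N*η) * (η^(1-a)/(1-a)) + η * (m * η^(-a)/a + N * (ε^(1-a)/(1-a)))) := by
    have := mul_le_mul_of_nonneg_left (add_le_add B1 B2) (div_nonneg hE.le h1a.le)
    refine le_trans ?_ this
    rw [hPsplit] at S0 B3
    refine (S0.trans (sub_le_sub_right B3 _)).trans (le_of_eq (by ring))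
  have C2 := mul_le_mul_of_nonneg_left C1 h1a.le
  refine C2.trans (le_of_eq ?_)
  have q1 : η^(a-1) * η^(1-a) = 1 := by
    rw [← Real.rpow_add hη]; simp
  have q2 : η^(a-1) * η = η^a := by
    rw [← Real.rpow_add_one hη.ne']; ring_nf
  have q3 : η^a * η^(-a) = 1 := by
    rw [← Real.rpow_add hη]; simp
  calc _ = (η^(a-1) * η^(1-a)) * ((m + N*η)/(1-a)) +
        ((η^(a-1) * η) * η^(-a)) * (m/a) + (η^(a-1) * η) * (N * ε^(1-a)/(1-a)) := by
        field_simp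
        ring
    _ = _ := by rw [q1, q2, q3]; ring

lemma core (a ε δ : ℝ) (ha : 0 < a) (ha1 : a < 1) (hε : 0 < ε) (hδ : 0 < δ)
    (p : ℝ → ℝ) (hp : Continuous p) (hp0 : ∀ u, 0 ≤ p u) (hpz : p 0 = 0)
    (hK : ∀ h, 0 < h → h ≤ ε →
      δ * h ≤ (∫ u in (0:ℝ)..ε, u^(-a) * p u) - ∫ u in h..ε, (u-h)^(-a) * p u) : False := by
  have h1a : 0 < 1 - a := by linarith
  have key : ∀ m, 0 < m → (1-a) * (δ * (ε^a/a)) ≤ m/(1-a) + m/a := by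
    intro m hm
    obtain ⟨N, hN, hpm⟩ : ∃ N, 0 ≤ N ∧ ∀ u ∈ Icc 0 ε, p u ≤ m + N * u := by
      obtain ⟨r, hr, hr2⟩ := Metric.continuousAt_iff.1 (hp.continuousAt (x := 0)) m hm
      obtain ⟨M, hM⟩ := (isCompact_Icc (a := (0:ℝ)) (b := ε)).bddAbove_image hp.continuousOn
      have hM0 : 0 ≤ M := (hp0 0).trans (hM ⟨0, ⟨le_rfl, hε.le⟩, rfl⟩)
      refine ⟨M/r, by positivity, fun u hu => ?_⟩
      rcases lt_or_ge u r with h | h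
      · have := hr2 (x := u) (by simpa [abs_of_nonneg hu.1] using h)
        rw [hpz, Real.dist_eq, sub_zero] at this
        have h2 := le_abs_self (p u)
        have : 0 ≤ M/r*u := mul_nonneg (by positivity) hu.1
        linarith
      · have h1 : p u ≤ M := hM ⟨u, hu, rfl⟩
        have h2 : M ≤ M/r*u := by
          rw [div_mul_eq_mul_div, le_div_iff₀ hr]
          exact mul_le_mul_of_nonneg_left h hM0
        linarith
    have c1 : Continuous (fun η : ℝ => (1-a) * (δ * ((ε^a - η^a)/a))) := by
      have := Real.continuous_rpow_const ha.le
      fun_prop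
    have c2 : Continuous (fun η : ℝ => (m + N*η)/(1-a) + m/a + η^a * (N * ε^(1-a)/(1-a))) := by
      have := Real.continuous_rpow_const ha.le
      fun_prop
    have t1 := (c1.tendsto 0).mono_left (nhdsWithin_le_nhds (s := Ioi 0))
    have t2 := (c2.tendsto 0).mono_left (nhdsWithin_le_nhds (s := Ioi 0))
    have := le_of_tendsto_of_tendsto t1 t2 (by
      filter_upwards [Ioo_mem_nhdsGT hε] with η hη
      exact est a η ε δ m N ha ha1 hη.1 hη.2 hm.le hN p hp hp0 hpm hK)
    simpa [Real.zero_rpow ha.ne'] using this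
  have hpos : 0 < (1-a) * (δ * (ε^a/a)) := by positivity
  set c := (1-a) * (δ * (ε^a/a))
  set k := 1/(1-a) + 1/a with hk
  have hk0 : 0 < k := by positivity
  have := key (c/(2*k)) (by positivity)
  have e : c/(2*k)/(1-a) + c/(2*k)/a = c/(2*k)*k := by rw [hk]; ring
  rw [e] at this
  have e2 : c/(2*k)*k = c/2 := by field_simp
  linarith

theorem rl_deriv_nonpos_at_min (T α : ℝ) (hT : 0 < T) (hα : α ∈ Ioo (0:ℝ) 1)
    (f f' : ℝ → ℝ)
    (hfc : ContinuousOn f (Icc 0 T))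
    (hfderiv : ∀ t ∈ Ioo 0 T, HasDerivAt f (f' t) t)
    (hf'int : IntegrableOn f' (Ioc 0 T))
    (t0 : ℝ) (ht0 : t0 ∈ Ioc 0 T)
    (hmin : ∀ s ∈ Icc 0 T, f t0 ≤ f s) :
    riemannLiouville α (fun t => f t - f 0) t0 ≤ 0 := by
  obtain ⟨ha, ha1⟩ := hα
  obtain ⟨ht, htT⟩ := ht0
  have h1a : 0 < 1 - α := by linarith
  unfold riemannLiouville
  set F : ℝ → ℝ := fun τ => ∫ s in Set.Ioc 0 τ, (τ - s) ^ (-α) / Real.Gamma (1 - α) * (f s - f 0)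
    with hF
  by_contra hL
  push Not at hL
  set L := deriv F t0 with hLdef
  have hΓ : 0 < Real.Gamma (1 - α) := Real.Gamma_pos_of_pos h1a
  set Γ := Real.Gamma (1 - α) with hΓdef
  have hd : HasDerivAt F L t0 := (differentiableAt_of_deriv_ne_zero hL.ne').hasDerivAt
  let q : ℝ → ℝ := IccExtend hT.le (domRestrict (Icc 0 T) f)
  have hq : Continuous q := (continuousOn_iff_continuous_domRestrict.1 hfc).Icc_extend'
  have hqe : ∀ s ∈ Icc 0 T, q s = f s := fun s hs => IccExtend_of_mem hT.le _ hs
  let p : ℝ → ℝ := fun u => q (t0 - u) - f t0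
  have hp : Continuous p := by fun_prop
  have hp0 : ∀ u, 0 ≤ p u := fun u => by
    simp only [p, q, IccExtend, Function.comp, domRestrict]
    exact sub_nonneg.2 (hmin _ (Subtype.prop _))
  have hpz : p 0 = 0 := by
    simp only [p, sub_zero]
    rw [hqe t0 ⟨ht.le, htT⟩, sub_self]
  set c := f t0 - f 0 with hc
  have hc0 : c ≤ 0 := sub_nonpos.2 (hmin 0 ⟨le_rfl, hT.le⟩)
  have hFe : ∀ h, 0 ≤ h → h ≤ t0 →
      Γ * F (t0 - h) = ∫ u in h..t0, (u-h)^(-α) * (p u + c) := by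
    intro h h0 h1
    have e := intervalIntegral.integral_comp_sub_left (a := h) (b := t0)
      (fun s => (t0 - h - s)^(-α) * (q s - f 0)) t0
    rw [sub_self] at e
    have e1 : ∫ u in h..t0, (u-h)^(-α) * (p u + c) =
        ∫ u in h..t0, (t0 - h - (t0 - u))^(-α) * (q (t0 - u) - f 0) := by
      apply intervalIntegral.integral_congr
      intro u _
      simp only [p, hc]
      rw [show t0 - h - (t0 - u) = u - h by ring]
      ring
    rw [e1, e, intervalIntegral.integral_of_le (by linarith), hF]
    simp only []
    rw [← integral_const_mul]
    apply setIntegral_congr_fun measurableSet_Ioc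
    intro s hs
    simp only []
    rw [hqe s ⟨hs.1.le, by linarith [hs.2]⟩]
    field_simp
  -- left difference quotients
  have hd2 : HasDerivAt (fun h => F (t0 - h)) (-L) 0 := by
    have : HasDerivAt F L (t0 - 0) := by rwa [sub_zero]
    exact HasDerivAt.comp_const_sub t0 0 this
  have hev := hd2.tendsto_slope_zero_right.eventually_lt_const (show -L < -(L/2) by linarith)
  obtain ⟨e0, he0, hsub⟩ := mem_nhdsGT_iff_exists_Ioo_subset.1 hev
  have he0 : 0 < e0 := he0
  set ε := min (e0/2) t0 with hε
  have hε0 : 0 < ε := by positivity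
  have hεt : ε ≤ t0 := min_le_right _ _
  have hεe : ε < e0 := (min_le_left _ _).trans_lt (by linarith)
  refine core α ε (Γ * (L/2)) ha ha1 hε0 (by positivity) p hp hp0 hpz ?_
  intro h h0 h1
  have hs : h⁻¹ • (F (t0 - (0 + h)) - F (t0 - 0)) < -(L/2) := hsub ⟨h0, h1.trans_lt hεe⟩
  rw [zero_add, smul_eq_mul, inv_mul_lt_iff₀ h0] at hs
  have hht : h ≤ t0 := h1.trans hεt
  have E0 := hFe 0 le_rfl ht.le
  have E1 := hFe h h0.le hht
  have i0 : ∀ x y, IntervalIntegrable (fun x : ℝ => x^(-α)) volume x y := fun x y =>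
    intervalIntegral.intervalIntegrable_rpow' (by linarith)
  have ih : ∀ x y, IntervalIntegrable (fun x : ℝ => (x-h)^(-α)) volume x y := fun x y => by
    have := (i0 (x-h) (y-h)).comp_sub_right h
    simpa using this
  have ip : ∀ x y, IntervalIntegrable (fun x : ℝ => x^(-α) * p x) volume x y := fun x y =>
    (i0 x y).mul_continuousOn hp.continuousOn
  have iph : ∀ x y, IntervalIntegrable (fun x : ℝ => (x-h)^(-α) * p x) volume x y := fun x y =>
    (ih x y).mul_continuousOn hp.continuousOn
  simp only [sub_zero, mul_add] at E0 E1
  rw [intervalIntegral.integral_add (ip _ _) ((i0 _ _).mul_const _),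
    intervalIntegral.integral_mul_const, integral_rpow (Or.inl (by linarith)),
    ← intervalIntegral.integral_add_adjacent_intervals (ip 0 ε) (ip ε t0)] at E0
  rw [intervalIntegral.integral_add (iph _ _) ((ih _ _).mul_const _),
    intervalIntegral.integral_mul_const,
    intervalIntegral.integral_comp_sub_right (fun x : ℝ => x^(-α)) h,
    integral_rpow (Or.inl (by linarith)),
    ← intervalIntegral.integral_add_adjacent_intervals (iph h ε) (iph ε t0)] at E1
  have hne : -α + 1 ≠ 0 := by linarith
  rw [Real.zero_rpow hne] at E0
  rw [sub_self, Real.zero_rpow hne] at E1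
  have hmono : ∫ u in ε..t0, u^(-α) * p u ≤ ∫ u in ε..t0, (u-h)^(-α) * p u := by
    apply intervalIntegral.integral_mono_on_of_le_Ioo hεt (ip _ _) (iph _ _)
    intro u hu
    apply mul_le_mul_of_nonneg_right _ (hp0 u)
    exact Real.rpow_le_rpow_of_nonpos (by linarith [hu.1]) (by linarith) (by linarith)
  have hcc : (t0^(-α+1) - 0)/(-α+1) * c ≤ ((t0-h)^(-α+1) - 0)/(-α+1) * c := by
    apply mul_le_mul_of_nonpos_right _ hc0
    apply div_le_div_of_nonneg_right _ (by linarith)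
    have := Real.rpow_le_rpow (by linarith : 0 ≤ t0 - h) (by linarith : t0 - h ≤ t0)
      (by linarith : 0 ≤ -α+1)
    linarith
  rw [sub_zero] at hs
  have := mul_lt_mul_of_pos_left hs hΓ
  have e : Γ * (F (t0-h) - F t0) = Γ * F (t0-h) - Γ * F t0 := by ring
  rw [e, E0, E1] at this
  linarith
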